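/- arXiv:2401.07153 — 2 statements merged into one kernel-verified Lean document; each statement's English description precedes it below -/
import Mathlib

section
/- Let Υ_I be the 12×8 0/1 matrix defined by Υ_I[(n−1)·4+m, ℓ] = 1 if d_tx[n] + d_rx[m] = ℓ−1 and 0 otherwise, where (d_tx[1],d_tx[2],d_tx[3]) = (0,1,2) and (d_rx[1],d_rx[2],d_rx[3],d_rx[4]) = (0,1,2,5). Then for every S ∈ ℂ^{2×3} and every A ∈ ℂ^{8×V} with V ≥ 8, there exist vectors x, z ∈ ℂ^V with x ≠ z, each having at most 4 nonzero entries, such that (S ⊗ I_4) Υ_I A x = (S ⊗ I_4) Υ_I A z. -/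
open Matrix Kronecker

/-- Transmit positions of Array I: {0,1,2}. -/
def dtx : Fin 3 → ℕ := ![0, 1, 2]

/-- Receive positions of Array I: {0,1,2,5}. -/
def drxI : Fin 4 → ℕ := ![0, 1, 2, 5]

/-- Redundancy pattern of Array I: row (n, m), column ℓ is 1 iff dtx n + drxI m = ℓ. -/
noncomputable def UpsilonI : Matrix (Fin 3 × Fin 4) (Fin 8) ℂ :=
  fun p ℓ => if dtx p.1 + drxI p.2 = (ℓ : ℕ) then 1 else 0

/-!
If a receiver is isolated, so that none of its virtual positions is shared with another
transmitter-receiver pair, then the corresponding columns of `(S ⊗ I) Υ` are the columns of `S`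
padded with zeros. A rank-deficient waveform `S` therefore makes `(S ⊗ I) Υ` rank-deficient, however
many virtual positions there are. For Array I the receiver at position 5 is isolated and `S` has
fewer rows than columns, so `(S ⊗ I) Υ A` has rank at most 7. Any matrix of rank `r` with more than
`r` columns has a nonzero kernel vector with at most `r + 1` nonzero entries; sharing at most eight
nonzero entries between two vectors, four each, yields the two configurations.
-/

section Sparse

variable {n K : Type*} [Fintype n]

theorem hammingNorm_piecewise_zero_le {β : n → Type*} [∀ i, Zero (β i)] [∀ i, DecidableEq (β i)]
    (s : Finset n) [∀ i, Decidable (i ∈ s)] (w : ∀ i, β i) :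
    hammingNorm (s.piecewise w 0) ≤ s.card := by
  refine Finset.card_le_card fun i hi => ?_
  by_contra his
  simp [his] at hi

theorem exists_sub_eq_hammingNorm_le {β : n → Type*} [∀ i, AddGroup (β i)]
    [∀ i, DecidableEq (β i)] {w : ∀ i, β i} {a b : ℕ} (hw : hammingNorm w ≤ a + b) :
    ∃ x z : ∀ i, β i, x - z = w ∧ hammingNorm x ≤ a ∧ hammingNorm z ≤ b := by
  classical
  let s : Finset n := {i | w i ≠ 0}
  have hs : s.card ≤ a + b := hw
  obtain ⟨t, hts, ht⟩ := s.exists_subset_card_eq (min_le_right a s.card)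
  have hst : (s \ t).card = s.card - t.card := Finset.card_sdiff_of_subset hts
  refine ⟨t.piecewise w 0, (s \ t).piecewise (-w) 0, ?_,
    (hammingNorm_piecewise_zero_le t w).trans (by omega),
    (hammingNorm_piecewise_zero_le (s \ t) (-w)).trans (by omega)⟩
  ext i
  by_cases hit : i ∈ t
  · simp [hit]
  · by_cases hi : w i = 0 <;> simp [hit, hi, s]

variable [Field K] {m : Type*} {M : Matrix m n K}

theorem rank_lt_card_iff_not_linearIndependent_col :
    M.rank < Fintype.card n ↔ ¬LinearIndependent K M.col := by
  rw [linearIndependent_iff_card_eq_finrank_span, Set.finrank, ← rank_eq_finrank_span_cols, eq_comm,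
    M.rank_le_card_width.lt_iff_ne]

theorem card_le_rank_of_linearIndepOn_col {s : Finset n} (hs : LinearIndepOn K M.col s) :
    s.card ≤ M.rank := by
  have := FiniteDimensional.span_of_finite K (Set.finite_range M.col)
  calc s.card = Module.finrank K (Submodule.span K (Set.range fun i : s => M.col i)) :=
        (Fintype.card_coe s).symm.trans (finrank_span_eq_card hs).symm
    _ ≤ Module.finrank K (Submodule.span K (Set.range M.col)) :=
        Submodule.finrank_mono (Submodule.span_mono (Set.range_comp_subset_range _ _))
    _ = M.rank := M.rank_eq_finrank_span_cols.symm

variable [DecidableEq K]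

theorem exists_ne_zero_hammingNorm_le_rank_add_one_mulVec_eq_zero (hM : M.rank < Fintype.card n) :
    ∃ w : n → K, w ≠ 0 ∧ hammingNorm w ≤ M.rank + 1 ∧ M *ᵥ w = 0 := by
  classical
  obtain ⟨s, -, hs⟩ := Finset.univ.exists_subset_card_eq (n := M.rank + 1) hM
  have hdep : ¬LinearIndepOn K M.col (s : Set n) := fun hind =>
    M.rank.not_succ_le_self (hs.symm.trans_le (card_le_rank_of_linearIndepOn_col hind))
  obtain ⟨f, hf, i, his, hfi⟩ := not_linearIndepOn_finset_iff.mp hdep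
  refine ⟨s.piecewise f 0, fun h => hfi ?_, hs ▸ hammingNorm_piecewise_zero_le s f, ?_⟩
  · simpa [his] using congrFun h i
  · ext r
    simpa [mulVec, dotProduct, Finset.piecewise, mul_comm] using congrFun hf r

theorem exists_ne_hammingNorm_le_mulVec_eq {k : ℕ} (hM : M.rank < Fintype.card n)
    (hk : M.rank < 2 * k) :
    ∃ x z : n → K, x ≠ z ∧ hammingNorm x ≤ k ∧ hammingNorm z ≤ k ∧ M *ᵥ x = M *ᵥ z := by
  obtain ⟨w, hw, hcard, hMw⟩ := exists_ne_zero_hammingNorm_le_rank_add_one_mulVec_eq_zero hM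
  obtain ⟨x, z, rfl, hx, hz⟩ := exists_sub_eq_hammingNorm_le (hcard.trans (show _ ≤ k + k by omega))
  exact ⟨x, z, sub_ne_zero.mp hw, hx, hz, sub_eq_zero.mp (by rwa [← mulVec_sub])⟩

end Sparse

section Array

variable {ι κ τ K : Type*}

/-- The redundancy pattern of the array with transmit positions `tx` and receive positions `rx`,
mapping a signal on the virtual positions `0, …, L - 1` to the transmitter-receiver pairs; a pair
whose virtual position is `L` or more has a zero row. -/
def redundancyPattern (K : Type*) [Zero K] [One K] (tx : ι → ℕ) (rx : κ → ℕ) (L : ℕ) :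
    Matrix (ι × κ) (Fin L) K :=
  fun p ℓ => if tx p.1 + rx p.2 = (ℓ : ℕ) then 1 else 0

/-- The receiver `m₀` is isolated if every virtual position `tx i + rx m₀` to which it contributes
arises from a single transmitter-receiver pair; the case `m = m₀` makes `tx` injective. Through such
a receiver the redundancy pattern preserves the linear dependences of the waveform. -/
def IsIsolatedReceiver (tx : ι → ℕ) (rx : κ → ℕ) (m₀ : κ) : Prop :=
  ∀ i j m, tx i + rx m = tx j + rx m₀ → i = j ∧ m = m₀

variable {tx : ι → ℕ} {rx : κ → ℕ} {m₀ : κ} {L : ℕ}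

theorem IsIsolatedReceiver.tx_add_rx_eq_iff (h : IsIsolatedReceiver tx rx m₀) {p : ι × κ} {j : ι} :
    tx p.1 + rx p.2 = tx j + rx m₀ ↔ p = (j, m₀) :=
  ⟨fun hp => Prod.ext_iff.mpr (h _ _ _ hp), by rintro rfl; rfl⟩

theorem IsIsolatedReceiver.injective_tx_add_rx (h : IsIsolatedReceiver tx rx m₀) :
    Function.Injective fun i => tx i + rx m₀ :=
  fun i j hij => (h i j m₀ hij).1

variable [Fintype ι] [Fintype κ] [DecidableEq κ]

theorem IsIsolatedReceiver.kronecker_one_mul_redundancyPattern_apply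
    [NonAssocSemiring K] (h : IsIsolatedReceiver tx rx m₀) (S : Matrix τ ι K) (q : τ × κ) {j : ι}
    {ℓ : Fin L} (hℓ : tx j + rx m₀ = ℓ) :
    ((S ⊗ₖ (1 : Matrix κ κ K)) * redundancyPattern K tx rx L) q ℓ =
      S q.1 j * (1 : Matrix κ κ K) q.2 m₀ := by
  classical
  simp only [mul_apply, redundancyPattern, ← hℓ, h.tx_add_rx_eq_iff, mul_ite, mul_one, mul_zero,
    Finset.sum_ite_eq', Finset.mem_univ, if_true, kroneckerMap_apply]

theorem IsIsolatedReceiver.linearIndependent_col [CommSemiring K]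
    (h : IsIsolatedReceiver tx rx m₀) (hL : ∀ i, tx i + rx m₀ < L)
    {S : Matrix τ ι K}
    (hind : LinearIndependent K ((S ⊗ₖ (1 : Matrix κ κ K)) * redundancyPattern K tx rx L).col) :
    LinearIndependent K S.col := by
  let pos : ι → Fin L := fun i => ⟨tx i + rx m₀, hL i⟩
  have hpos : Function.Injective pos := fun i j hij =>
    h.injective_tx_add_rx (congrArg Fin.val hij)
  let embed : (τ → K) →ₗ[K] τ × κ → K :=
    LinearMap.pi fun q => (1 : Matrix κ κ K) q.2 m₀ • LinearMap.proj q.1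
  refine LinearIndependent.of_comp embed ?_
  convert hind.comp pos hpos using 1
  ext i q
  simp [embed, h.kronecker_one_mul_redundancyPattern_apply S q (ℓ := pos i) rfl, mul_comm]

variable [Field K]

theorem IsIsolatedReceiver.rank_kronecker_one_mul_redundancyPattern_lt
    (h : IsIsolatedReceiver tx rx m₀) (hL : ∀ i, tx i + rx m₀ < L) {S : Matrix τ ι K}
    (hS : S.rank < Fintype.card ι) :
    ((S ⊗ₖ (1 : Matrix κ κ K)) * redundancyPattern K tx rx L).rank < L := by
  rw [rank_lt_card_iff_not_linearIndependent_col] at hS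
  simpa only [Fintype.card_fin] using rank_lt_card_iff_not_linearIndependent_col.mpr
    (mt (h.linearIndependent_col hL) hS)

theorem stmt11_general {n : Type*} [Fintype n] [DecidableEq K] {k : ℕ}
    (h : IsIsolatedReceiver tx rx m₀) (hL : ∀ i, tx i + rx m₀ < L) {S : Matrix τ ι K}
    (hS : S.rank < Fintype.card ι) (hLk : L ≤ 2 * k) (hn : L ≤ Fintype.card n)
    (A : Matrix (Fin L) n K) :
    ∃ x z : n → K, x ≠ z ∧ hammingNorm x ≤ k ∧ hammingNorm z ≤ k ∧
      ((S ⊗ₖ (1 : Matrix κ κ K)) * redundancyPattern K tx rx L * A) *ᵥ x =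
        ((S ⊗ₖ (1 : Matrix κ κ K)) * redundancyPattern K tx rx L * A) *ᵥ z := by
  have hrank := (rank_mul_le_left _ A).trans_lt
    (h.rank_kronecker_one_mul_redundancyPattern_lt hL hS)
  exact exists_ne_hammingNorm_le_mulVec_eq (hrank.trans_le hn) (hrank.trans_le hLk)

end Array

theorem isIsolatedReceiver_dtx_drxI : IsIsolatedReceiver dtx drxI 3 := by
  unfold IsIsolatedReceiver
  decide

theorem UpsilonI_eq_redundancyPattern : UpsilonI = redundancyPattern ℂ dtx drxI 8 :=
  rfl

theorem stmt11 (S : Matrix (Fin 2) (Fin 3) ℂ) (V : ℕ) (hV : 8 ≤ V)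
    (A : Matrix (Fin 8) (Fin V) ℂ) :
    ∃ x z : Fin V → ℂ, x ≠ z ∧
      (Finset.univ.filter fun i => x i ≠ 0).card ≤ 4 ∧
      (Finset.univ.filter fun i => z i ≠ 0).card ≤ 4 ∧
      ((S ⊗ₖ (1 : Matrix (Fin 4) (Fin 4) ℂ)) * UpsilonI * A) *ᵥ x =
        ((S ⊗ₖ (1 : Matrix (Fin 4) (Fin 4) ℂ)) * UpsilonI * A) *ᵥ z := by
  rw [UpsilonI_eq_redundancyPattern]
  have hS : S.rank < Fintype.card (Fin 3) := S.rank_le_height.trans_lt (by simp)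
  exact stmt11_general (k := 4) isIsolatedReceiver_dtx_drxI (by decide) hS le_rfl
    (by simpa using hV) A
end

section
/- Let S ∈ ℂ^{T×N_tx} have rank N_tx, let Υ ∈ ℂ^{N_tx N_rx × N_Σ} be a 0/1 matrix in which every row has exactly one entry equal to 1 and every column has at least one entry equal to 1, and let A ∈ ℂ^{N_Σ×V} be such that every set of N_Σ columns of A is linearly independent. Then every set of N_Σ columns of B = (S ⊗ I_{N_rx}) Υ A is linearly independent; i.e., the Kruskal rank of B equals its maximal value N_Σ. -/
open Matrix Kronecker

/-!
Both `S ⊗ I` and `Υ` are injective as linear maps, so multiplying by them on the left preserves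
all linear relations among the columns of `A` and creates no new ones. For `S ⊗ I`, this is because
it applies `S` separately to each of the `N_rx` slices `x (·, k)` of a vector `x`. For `Υ`, it is
because every coordinate `x ℓ` can be read off `Υ x` at any row whose single `1` lies in column `ℓ`.
-/

variable {R l m n p ι : Type*}

theorem mulVec_injective_of_rank_eq_card [CommRing R] [Nontrivial R] [Fintype n]
    {M : Matrix m n R} (hM : M.rank = Fintype.card n) : Function.Injective M.mulVec := by
  rw [mulVec_injective_iff, linearIndependent_iff_card_eq_finrank_span, ← hM]
  exact M.rank_eq_finrank_span_cols

theorem kronecker_one_mulVec_apply [NonAssocSemiring R] [Fintype n] [Fintype p] [DecidableEq p]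
    (M : Matrix m n R) (x : n × p → R) (i : m) (k : p) :
    ((M ⊗ₖ (1 : Matrix p p R)) *ᵥ x) (i, k) = (M *ᵥ fun j => x (j, k)) i := by
  simp [mulVec, dotProduct, Fintype.sum_prod_type, one_apply]

theorem kronecker_one_mulVec_injective [NonAssocSemiring R] [Fintype n] [Fintype p]
    [DecidableEq p] {M : Matrix m n R} (hM : Function.Injective M.mulVec) :
    Function.Injective (M ⊗ₖ (1 : Matrix p p R)).mulVec := by
  intro x y hxy
  ext ⟨j, k⟩
  have slice_eq : (fun j => x (j, k)) = fun j => y (j, k) := hM <| funext fun i => by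
    simpa only [kronecker_one_mulVec_apply] using congrFun hxy (i, k)
  exact congrFun slice_eq j

theorem row_eq_single_of_zero_or_one [Zero R] [One R] [DecidableEq n] {M : Matrix m n R} {i : m}
    {j : n} (h01 : ∀ j', M i j' = 0 ∨ M i j' = 1) (hone : M i j = 1)
    (huniq : ∀ j', M i j' = 1 → j' = j) : M.row i = Pi.single j 1 := by
  ext j'
  rcases eq_or_ne j' j with rfl | hne
  · rw [Pi.single_eq_same, row_apply, hone]
  · rw [Pi.single_eq_of_ne hne, row_apply, (h01 j').resolve_right (mt (huniq j') hne)]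

theorem mulVec_injective_of_forall_exists_row_eq_single [NonAssocSemiring R] [Fintype n]
    [DecidableEq n] {M : Matrix m n R} (hM : ∀ j, ∃ i, M.row i = Pi.single j 1) :
    Function.Injective M.mulVec := by
  intro x y hxy
  ext j
  obtain ⟨i, hi⟩ := hM j
  have mulVec_apply_eq (z : n → R) : (M *ᵥ z) i = z j := by
    rw [← single_one_dotProduct j z, ← hi]
    rfl
  rw [← mulVec_apply_eq x, ← mulVec_apply_eq y]
  exact congrFun hxy i

theorem linearIndependent_transpose_mul_iff [CommSemiring R] [Fintype n] {M : Matrix m n R}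
    (hM : Function.Injective M.mulVec) (A : Matrix n p R) (c : ι → p) :
    LinearIndependent R (fun i => (M * A)ᵀ (c i)) ↔ LinearIndependent R fun i => Aᵀ (c i) :=
  M.mulVecLin.linearIndependent_iff_of_injOn hM.injOn

theorem stmt13_general [CommRing R] [Nontrivial R] [Fintype m] [Fintype n] [Fintype p]
    [DecidableEq n] [DecidableEq p] {V : Type*} (S : Matrix l m R) (hS : S.rank = Fintype.card m)
    (Υ : Matrix (m × p) n R) (hΥ : ∀ ℓ, ∃ r, Υ.row r = Pi.single ℓ 1) (A : Matrix n V R)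
    (c : ι → V) :
    LinearIndependent R (fun i => ((S ⊗ₖ (1 : Matrix p p R)) * Υ * A)ᵀ (c i)) ↔
      LinearIndependent R fun i => Aᵀ (c i) := by
  have hSI : Function.Injective (S ⊗ₖ (1 : Matrix p p R)).mulVec :=
    kronecker_one_mulVec_injective (mulVec_injective_of_rank_eq_card hS)
  rw [Matrix.mul_assoc, linearIndependent_transpose_mul_iff hSI,
    linearIndependent_transpose_mul_iff (mulVec_injective_of_forall_exists_row_eq_single hΥ)]

theorem stmt13 (T Ntx Nrx Nsum V : ℕ)
    (S : Matrix (Fin T) (Fin Ntx) ℂ) (hS : S.rank = Ntx)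
    (Υ : Matrix (Fin Ntx × Fin Nrx) (Fin Nsum) ℂ)
    (hΥ01 : ∀ r ℓ, Υ r ℓ = 0 ∨ Υ r ℓ = 1)
    (hrow : ∀ r, ∃! ℓ, Υ r ℓ = 1)
    (hcol : ∀ ℓ, ∃ r, Υ r ℓ = 1)
    (A : Matrix (Fin Nsum) (Fin V) ℂ)
    (hA : ∀ s : Finset (Fin V), s.card = Nsum →
        LinearIndependent ℂ (fun i : s => Aᵀ (i : Fin V))) :
    ∀ s : Finset (Fin V), s.card = Nsum →
      LinearIndependent ℂ
        (fun i : s => ((S ⊗ₖ (1 : Matrix (Fin Nrx) (Fin Nrx) ℂ)) * Υ * A)ᵀ (i : Fin V)) := by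
  intro s hs
  have hΥ (ℓ : Fin Nsum) : ∃ r, Υ.row r = Pi.single ℓ 1 := (hcol ℓ).imp fun r hr =>
    row_eq_single_of_zero_or_one (hΥ01 r) hr fun _ h => (hrow r).unique h hr
  exact (stmt13_general S (hS.trans (Fintype.card_fin Ntx).symm) Υ hΥ A _).2 (hA s hs)
end
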